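/- arXiv:2303.08102 — 6 statements merged into one kernel-verified Lean document; each statement's English description precedes it below -/
import Mathlib

section
/- The three similarity indices satisfy the chain of inequalities TV(Θ) ≤ S*(Θ) ≤ S(Θ), where TV(Θ) is computed from any enumeration of Θ. -/
open Finset

noncomputable section

/-- `p` is a probability vector on the arm set `Fin K`. -/
def IsProbVec {K : ℕ} (p : Fin K → ℝ) : Prop :=
  (∀ j, 0 ≤ p j) ∧ ∑ j, p j = 1

/-- `S(Θ) = ∑_j max_θ θ(j)`. -/
def polS (K N : ℕ) (θ : ℕ → Fin K → ℝ) : ℝ :=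
  ∑ j, ⨆ i : Fin N, θ i j

/-- `S*(Θ) = ∑_j (max_θ θ(j) - min_θ θ(j))`. -/
def polSstar (K N : ℕ) (θ : ℕ → Fin K → ℝ) : ℝ :=
  ∑ j, ((⨆ i : Fin N, θ i j) - ⨅ i : Fin N, θ i j)

/-- `TV(Θ)` computed from the enumeration `θ 0, …, θ (N-1)`. -/
def polTV (K N : ℕ) (θ : ℕ → Fin K → ℝ) : ℝ :=
  ∑ i ∈ Finset.Ico 1 N, ∑ j, max (θ i j - ⨆ k : Fin i, θ (k : ℕ) j) 0

/-!
For each arm, the positive part of `θ_i(j) - max_{k<i} θ_k(j)` is exactly the jump of the running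
maximum at step `i`. The jumps telescope, so `TV(Θ) = ∑_j (max_θ θ(j) - θ_1(j))`, and
`θ_1(j) ≥ min_θ θ(j) ≥ 0`.
-/

section RunningSup

variable {α : Type*} [ConditionallyCompleteLattice α]

theorem ciSup_fin_succ_eq_sup {n : ℕ} (hn : 1 ≤ n) (f : ℕ → α) :
    ⨆ i : Fin (n + 1), f i = f n ⊔ ⨆ i : Fin n, f i := by
  have : Nonempty (Fin n) := ⟨⟨0, hn⟩⟩
  have range_succ : Set.range (fun i : Fin (n + 1) => f i)
      = insert (f n) (Set.range fun i : Fin n => f i) := by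
    ext x
    simp [Fin.exists_fin_succ', or_comm, eq_comm]
  rw [iSup, range_succ, csSup_insert (Set.finite_range _).bddAbove (Set.range_nonempty _), iSup]

variable [AddCommGroup α] [IsOrderedAddMonoid α]

theorem sub_ciSup_fin_sup_zero {n : ℕ} (hn : 1 ≤ n) (f : ℕ → α) :
    (f n - ⨆ k : Fin n, f k) ⊔ 0 = (⨆ k : Fin (n + 1), f k) - ⨆ k : Fin n, f k := by
  rw [ciSup_fin_succ_eq_sup hn, sup_sub, sub_self]

theorem sum_Ico_sub_ciSup_fin_sup_zero {N : ℕ} (hN : 1 ≤ N) (f : ℕ → α) :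
    ∑ i ∈ Ico 1 N, ((f i - ⨆ k : Fin i, f k) ⊔ 0) = (⨆ i : Fin N, f i) - f 0 := by
  calc ∑ i ∈ Ico 1 N, ((f i - ⨆ k : Fin i, f k) ⊔ 0)
      = ∑ i ∈ Ico 1 N, ((⨆ k : Fin (i + 1), f k) - ⨆ k : Fin i, f k) :=
        sum_congr rfl fun _ hi => sub_ciSup_fin_sup_zero (mem_Ico.mp hi).1 f
    _ = (⨆ i : Fin N, f i) - ⨆ i : Fin 1, f i := sum_Ico_sub (fun n => ⨆ k : Fin n, f k) hN
    _ = (⨆ i : Fin N, f i) - f 0 := congrArg _ ciSup_unique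

end RunningSup

section SimilarityIndices

variable {K N : ℕ}

theorem polTV_eq_sum_ciSup_sub (hN : 1 ≤ N) (θ : ℕ → Fin K → ℝ) :
    polTV K N θ = ∑ j, ((⨆ i : Fin N, θ i j) - θ 0 j) := by
  rw [polTV, sum_comm]
  exact sum_congr rfl fun j _ => sum_Ico_sub_ciSup_fin_sup_zero hN (θ · j)

theorem polTV_le_polSstar (hN : 1 ≤ N) (θ : ℕ → Fin K → ℝ) : polTV K N θ ≤ polSstar K N θ := by
  rw [polTV_eq_sum_ciSup_sub hN, polSstar]
  gcongr with j
  exact ciInf_le (Set.finite_range fun i : Fin N => θ i j).bddBelow ⟨0, hN⟩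

theorem polSstar_le_polS {θ : ℕ → Fin K → ℝ} (hθ : ∀ i < N, ∀ j, 0 ≤ θ i j) :
    polSstar K N θ ≤ polS K N θ :=
  sum_le_sum fun j _ => sub_le_self _ (Real.iInf_nonneg fun i => hθ i i.isLt j)

theorem TV_le_Sstar_le_S_general (hN : 1 ≤ N) (θ : ℕ → Fin K → ℝ)
    (hθ : ∀ i < N, ∀ j, 0 ≤ θ i j) :
    polTV K N θ ≤ polSstar K N θ ∧ polSstar K N θ ≤ polS K N θ :=
  ⟨polTV_le_polSstar hN θ, polSstar_le_polS hθ⟩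

end SimilarityIndices

/-- `TV(Θ) ≤ S*(Θ) ≤ S(Θ)`, where `TV(Θ)` is computed from any enumeration of `Θ`. -/
theorem TV_le_Sstar_le_S {K N : ℕ} (hK : 1 ≤ K) (hN : 1 ≤ N)
    (θ : ℕ → Fin K → ℝ) (hθ : ∀ i < N, IsProbVec (θ i)) :
    polTV K N θ ≤ polSstar K N θ ∧ polSstar K N θ ≤ polS K N θ :=
  TV_le_Sstar_le_S_general hN θ fun i hi => (hθ i hi).1
end
end

section
/- For every probability vector τ on [K], S(Θ) − 1 ≤ Σ_{θ∈Θ} D_TV(θ, τ); equivalently, TV(Θ) ≤ min over probability vectors τ of Σ_{θ∈Θ} D_TV(θ, τ). -/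
open Finset

noncomputable section

/-- Total variation distance between probability vectors on `Fin K`. -/
def Dtv {K : ℕ} (p q : Fin K → ℝ) : ℝ :=
  (1 / 2) * ∑ j, |p j - q j|

/-!
For vectors of equal mass, `D_TV(θ, τ) = ∑ j, (θ j - τ j)⁺`, so the bound on `S(Θ)` reduces to the
coordinatewise estimate `max_i θ_i(j) ≤ τ(j) + ∑ i, (θ_i(j) - τ(j))⁺`. In each coordinate the
summands of `TV(Θ)` are the increments of the running maximum; they telescope to
`TV(Θ) = S(Θ) - ∑ j, θ_0(j)`, so the two bounds are the same.
-/

section PosPart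

variable {ι α : Type*} [Lattice α] [AddCommGroup α] [IsOrderedAddMonoid α]

lemma add_posPart_sub (a b : α) : a + (b - a)⁺ = a ⊔ b := by
  rw [posPart_def, add_sup, add_sub_cancel, add_zero, sup_comm]

lemma sum_abs_eq_two_nsmul_sum_posPart {s : Finset ι} {f : ι → α} (hf : ∑ i ∈ s, f i = 0) :
    ∑ i ∈ s, |f i| = 2 • ∑ i ∈ s, (f i)⁺ :=
  calc ∑ i ∈ s, |f i| = ∑ i ∈ s, (|f i| + f i) := by rw [sum_add_distrib, hf, add_zero]
    _ = 2 • ∑ i ∈ s, (f i)⁺ := by simp only [abs_add_eq_two_nsmul_posPart, sum_nsmul]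

end PosPart

section Supremum

variable {ι α : Type*} [ConditionallyCompleteLattice α]

lemma ciSup_fin_castSucc {n : ℕ} [Nonempty (Fin n)] (f : Fin (n + 1) → α) :
    ⨆ i, f i = (⨆ i : Fin n, f i.castSucc) ⊔ f (Fin.last n) := by
  apply le_antisymm
  · refine ciSup_le <| Fin.lastCases le_sup_right fun i ↦ ?_
    exact le_sup_of_le_left (Finite.le_ciSup (fun i : Fin n ↦ f i.castSucc) i)
  · exact sup_le (ciSup_le fun i ↦ Finite.le_ciSup f i.castSucc) (Finite.le_ciSup f (Fin.last n))

variable [AddCommGroup α] [IsOrderedAddMonoid α]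

lemma ciSup_le_add_sum_posPart [Fintype ι] [Nonempty ι] (f : ι → α) (a : α) :
    ⨆ i, f i ≤ a + ∑ i, (f i - a)⁺ := by
  refine ciSup_le fun i ↦ ?_
  calc f i ≤ a + (f i - a)⁺ := by rw [add_posPart_sub]; exact le_sup_right
    _ ≤ a + ∑ i, (f i - a)⁺ := by
      gcongr
      exact single_le_sum (f := fun i ↦ (f i - a)⁺) (fun _ _ ↦ posPart_nonneg _) (mem_univ i)

lemma sum_Ico_posPart_sub_ciSup (f : ℕ → α) {n : ℕ} (hn : 1 ≤ n) :
    ∑ i ∈ Ico 1 n, (f i - ⨆ k : Fin i, f k)⁺ = (⨆ i : Fin n, f i) - f 0 := by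
  have posPart_eq_increment : ∀ i ∈ Ico 1 n,
      (f i - ⨆ k : Fin i, f k)⁺ = (⨆ k : Fin (i + 1), f k) - ⨆ k : Fin i, f k := by
    intro i hi
    have : Nonempty (Fin i) := ⟨⟨0, (mem_Ico.mp hi).1⟩⟩
    rw [eq_sub_iff_add_eq', add_posPart_sub, ciSup_fin_castSucc]
    simp only [Fin.val_castSucc, Fin.val_last]
  rw [sum_congr rfl posPart_eq_increment, sum_Ico_sub (fun i ↦ ⨆ k : Fin i, f k) hn]
  simp only [ciSup_unique, Fin.default_eq_zero, Fin.val_zero]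

end Supremum

section Policies

variable {K N : ℕ}

lemma Dtv_eq_sum_posPart {p q : Fin K → ℝ} (hpq : ∑ j, p j = ∑ j, q j) :
    Dtv p q = ∑ j, (p j - q j)⁺ := by
  have sum_sub_eq_zero : ∑ j, (p j - q j) = 0 := by rw [sum_sub_distrib, hpq, sub_self]
  rw [Dtv, sum_abs_eq_two_nsmul_sum_posPart sum_sub_eq_zero, nsmul_eq_mul]
  ring

lemma polTV_eq_polS_sub_sum (hN : 1 ≤ N) (θ : ℕ → Fin K → ℝ) :
    polTV K N θ = polS K N θ - ∑ j, θ 0 j := by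
  calc polTV K N θ = ∑ j, ∑ i ∈ Ico 1 N, (θ i j - ⨆ k : Fin i, θ k j)⁺ := sum_comm
    _ = ∑ j, ((⨆ i : Fin N, θ i j) - θ 0 j) :=
      sum_congr rfl fun j _ ↦ sum_Ico_posPart_sub_ciSup (θ · j) hN
    _ = polS K N θ - ∑ j, θ 0 j := sum_sub_distrib _ _

lemma polS_le_sum_add_sum_posPart (hN : 1 ≤ N) (θ : ℕ → Fin K → ℝ) (τ : Fin K → ℝ) :
    polS K N θ ≤ ∑ j, τ j + ∑ i ∈ range N, ∑ j, (θ i j - τ j)⁺ := by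
  have : Nonempty (Fin N) := ⟨⟨0, hN⟩⟩
  calc polS K N θ ≤ ∑ j, (τ j + ∑ i : Fin N, (θ i j - τ j)⁺) :=
        sum_le_sum fun j _ ↦ ciSup_le_add_sum_posPart (fun i : Fin N ↦ θ i j) (τ j)
    _ = ∑ j, τ j + ∑ i ∈ range N, ∑ j, (θ i j - τ j)⁺ := by
      rw [sum_add_distrib, sum_comm, Fin.sum_univ_eq_sum_range fun i ↦ ∑ j, (θ i j - τ j)⁺]

theorem S_sub_one_le_sum_tv_general (hN : 1 ≤ N) (θ : ℕ → Fin K → ℝ) (τ : Fin K → ℝ)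
    (hθ : ∀ i < N, ∑ j, θ i j = ∑ j, τ j) :
    polS K N θ - ∑ j, τ j ≤ ∑ i ∈ range N, Dtv (θ i) τ ∧
    polTV K N θ ≤ ∑ i ∈ range N, Dtv (θ i) τ := by
  have sum_Dtv : ∑ i ∈ range N, Dtv (θ i) τ = ∑ i ∈ range N, ∑ j, (θ i j - τ j)⁺ :=
    sum_congr rfl fun i hi ↦ Dtv_eq_sum_posPart (hθ i (mem_range.mp hi))
  rw [polTV_eq_polS_sub_sum hN, hθ 0 hN, and_self, sum_Dtv, sub_le_iff_le_add']
  exact polS_le_sum_add_sum_posPart hN θ τ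

end Policies

/-- For every probability vector `τ` on `[K]`, `S(Θ) - 1 ≤ ∑_θ D_TV(θ,τ)`;
equivalently `TV(Θ) ≤ min_τ ∑_θ D_TV(θ,τ)`. -/
theorem S_sub_one_le_sum_tv {K N : ℕ} (hK : 1 ≤ K) (hN : 1 ≤ N)
    (θ : ℕ → Fin K → ℝ) (hθ : ∀ i < N, IsProbVec (θ i))
    (τ : Fin K → ℝ) (hτ : IsProbVec τ) :
    polS K N θ - 1 ≤ ∑ i ∈ Finset.range N, Dtv (θ i) τ ∧
    polTV K N θ ≤ ∑ i ∈ Finset.range N, Dtv (θ i) τ :=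
  hτ.2 ▸ S_sub_one_le_sum_tv_general hN θ τ fun i hi ↦ (hθ i hi).2.trans hτ.2.symm
end
end

section
/- Let P be a probability distribution on Θ, let ℓ ∈ [0,1]^K be a loss vector, and write ψ(j) = Σ_{θ∈Θ} P(θ)θ(j) and q(j) = min_{θ∈Θ} θ(j). Then the expected second moment of the shifted importance-weighted loss estimates satisfies Σ_{j: ψ(j)>0} ψ(j) · [Σ_{θ∈Θ} P(θ)(θ(j) − q(j))² ℓ(j)² / ψ(j)²] ≤ S*(Θ). -/
open Finset

noncomputable section

/-!
Fix an arm and let `q ≤ θ ≤ M` be the extremes over the policies. As `0 ≤ q`, one of the two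
factors of `(θ - q)²` is at most `θ`, which averages to `ψ`, and the other is at most `M - q`, so
the second moment at this arm is at most `ψ * (ψ * (M - q) / ψ²) = M - q`.
-/

section OrderedRing

variable {R : Type*} [CommRing R] [PartialOrder R] [IsOrderedRing R]

theorem sq_sub_le_mul_sub {q x M : R} (hq : 0 ≤ q) (hqx : q ≤ x) (hxM : x ≤ M) :
    (x - q) ^ 2 ≤ x * (M - q) := by
  rw [sq]
  exact mul_le_mul (sub_le_self x hq) (sub_le_sub_right hxM q) (sub_nonneg.2 hqx) (hq.trans hqx)

theorem sum_mul_sq_sub_le_sum_mul_mul_sub {ι : Type*} {s : Finset ι} {w f : ι → R} {q M : R}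
    (hw : ∀ i ∈ s, 0 ≤ w i) (hq : 0 ≤ q) (hqf : ∀ i ∈ s, q ≤ f i) (hfM : ∀ i ∈ s, f i ≤ M) :
    ∑ i ∈ s, w i * (f i - q) ^ 2 ≤ (∑ i ∈ s, w i * f i) * (M - q) := by
  simp_rw [sum_mul, mul_assoc]
  exact sum_le_sum fun i hi =>
    mul_le_mul_of_nonneg_left (sq_sub_le_mul_sub hq (hqf i hi) (hfM i hi)) (hw i hi)

end OrderedRing

theorem importance_weighted_second_moment_le {𝕜 ι : Type*} [Field 𝕜] [LinearOrder 𝕜]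
    [IsStrictOrderedRing 𝕜] {s : Finset ι} {w f : ι → 𝕜} {q M c : 𝕜}
    (hw : ∀ i ∈ s, 0 ≤ w i) (hq : 0 ≤ q) (hqf : ∀ i ∈ s, q ≤ f i) (hfM : ∀ i ∈ s, f i ≤ M)
    (hc : |c| ≤ 1) (hpos : 0 < ∑ i ∈ s, w i * f i) :
    (∑ i ∈ s, w i * f i) *
        (∑ i ∈ s, w i * (f i - q) ^ 2 * c ^ 2 / (∑ i ∈ s, w i * f i) ^ 2) ≤ M - q := by
  set ψ := ∑ i ∈ s, w i * f i
  have shifted_le : (∑ i ∈ s, w i * (f i - q) ^ 2) * c ^ 2 ≤ ψ * (M - q) :=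
    calc (∑ i ∈ s, w i * (f i - q) ^ 2) * c ^ 2
        ≤ ∑ i ∈ s, w i * (f i - q) ^ 2 :=
          mul_le_of_le_one_right
            (sum_nonneg fun i hi => mul_nonneg (hw i hi) (sq_nonneg _))
            ((sq_le_one_iff_abs_le_one c).2 hc)
      _ ≤ ψ * (M - q) := sum_mul_sq_sub_le_sum_mul_mul_sub hw hq hqf hfM
  calc ψ * ∑ i ∈ s, w i * (f i - q) ^ 2 * c ^ 2 / ψ ^ 2
      = (∑ i ∈ s, w i * (f i - q) ^ 2) * c ^ 2 / ψ := by
        rw [← sum_div, ← sum_mul]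
        field_simp
    _ ≤ M - q := (div_le_iff₀' hpos).2 shifted_le

theorem second_moment_le_Sstar_general {ι κ : Type*} [Nonempty ι] [Fintype κ]
    {θ : ι → κ → ℝ} (hθ : ∀ i j, 0 ≤ θ i j) (hbdd : ∀ j, BddAbove (Set.range fun i => θ i j))
    {s : Finset ι} {P : ι → ℝ} (hP : ∀ i ∈ s, 0 ≤ P i) {ℓ : κ → ℝ} (hℓ : ∀ j, |ℓ j| ≤ 1) :
    ∑ j with 0 < ∑ i ∈ s, P i * θ i j,
        (∑ i ∈ s, P i * θ i j) *
          (∑ i ∈ s, P i * (θ i j - ⨅ k, θ k j) ^ 2 * ℓ j ^ 2 / (∑ i ∈ s, P i * θ i j) ^ 2) ≤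
      ∑ j, ((⨆ i, θ i j) - ⨅ i, θ i j) := by
  have bddBelow (j : κ) : BddBelow (Set.range fun i => θ i j) :=
    ⟨0, Set.forall_mem_range.2 fun i => hθ i j⟩
  calc _ ≤ ∑ j with 0 < ∑ i ∈ s, P i * θ i j, ((⨆ i, θ i j) - ⨅ i, θ i j) :=
        sum_le_sum fun j hj =>
          importance_weighted_second_moment_le hP (le_ciInf fun i => hθ i j)
            (fun i _ => ciInf_le (bddBelow j) i) (fun i _ => le_ciSup (hbdd j) i) (hℓ j)
            (mem_filter.1 hj).2
    _ ≤ ∑ j, ((⨆ i, θ i j) - ⨅ i, θ i j) :=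
        sum_le_sum_of_subset_of_nonneg (filter_subset _ _) fun j _ _ =>
          sub_nonneg.2 (ciInf_le_ciSup (bddBelow j) (hbdd j))

/-- For a probability distribution `P` over the policies and losses `ℓ ∈ [0,1]^K`,
writing `ψ(j) = ∑_θ P(θ)θ(j)` and `q(j) = min_θ θ(j)`, the expected second moment of
the shifted importance-weighted loss estimates is at most
`S*(Θ) = ∑_j (max_θ θ(j) - min_θ θ(j))`. -/
theorem second_moment_le_Sstar {K N : ℕ} (hN : 1 ≤ N)
    (θ : Fin N → Fin K → ℝ) (hθ : ∀ i, IsProbVec (θ i))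
    (P : Fin N → ℝ) (hP0 : ∀ i, 0 ≤ P i) (hP1 : ∑ i, P i = 1)
    (ℓ : Fin K → ℝ) (hℓ : ∀ j, ℓ j ∈ Set.Icc (0 : ℝ) 1) :
    ∑ j ∈ Finset.univ.filter (fun j : Fin K => 0 < ∑ i, P i * θ i j),
        (∑ i, P i * θ i j) *
          (∑ i, P i * (θ i j - ⨅ k : Fin N, θ k j) ^ 2 * (ℓ j) ^ 2 / (∑ i, P i * θ i j) ^ 2) ≤
      ∑ j, ((⨆ i : Fin N, θ i j) - ⨅ i : Fin N, θ i j) := by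
  have : Nonempty (Fin N) := ⟨⟨0, hN⟩⟩
  exact second_moment_le_Sstar_general (fun i => (hθ i).1) (fun _ => (Set.finite_range _).bddAbove)
    (fun i _ => hP0 i) fun j => (abs_of_nonneg (hℓ j).1).trans_le (hℓ j).2
end
end

section
/- Let ū = (1/N) Σ_{θ∈Θ} θ be the uniform mixture of the policies. If there is a constant r ≥ 0 such that D(θ‖ū) = r for every θ ∈ Θ, then for every probability vector τ on [K] one has max_{θ∈Θ} D(θ‖τ) ≥ r, and hence D*(Θ) = r (the infimum is attained at ū). -/
open Finset

noncomputable section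

/-- KL-divergence `D(p‖q) = ∑_{j : p(j)>0} p(j) log (p(j)/q(j))`, equal to `+∞` if
`p(j) > 0` for some `j` with `q(j) = 0`. -/
def KL {K : ℕ} (p q : Fin K → ℝ) : ENNReal :=
  if ∀ j, q j = 0 → p j = 0 then
    ENNReal.ofReal (∑ j ∈ Finset.univ.filter (fun j : Fin K => 0 < p j),
      p j * Real.log (p j / q j))
  else ⊤

/-- `D*(Θ) = inf_{τ ∈ Δ_{K-1}} max_{θ ∈ Θ} D(θ‖τ)`. -/
def Dstar (K N : ℕ) (θ : ℕ → Fin K → ℝ) : ENNReal :=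
  ⨅ τ : {τ : Fin K → ℝ // IsProbVec τ}, ⨆ i ∈ Finset.range N, KL (θ i) τ.1

/-!
For a mixture `u = ∑ wᵢ θᵢ` of probability vectors, the compensation identity
`∑ wᵢ D(θᵢ‖τ) = ∑ wᵢ D(θᵢ‖u) + D(u‖τ)` and Gibbs' inequality `D(u‖τ) ≥ 0` show that the average
divergence `∑ wᵢ D(θᵢ‖τ)`, and with it the maximal one, is at least `∑ wᵢ D(θᵢ‖u)`. If all the
`D(θᵢ‖u)` with `wᵢ ≠ 0` equal `r` and the others are at most `r`, this lower bound is `r`, and it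
is attained at `τ = u`.
-/

section RelEntropy

variable {ι α : Type*} [Fintype ι] {p q u : ι → ℝ}

/-- The relative entropy `∑ⱼ p(j) log (p(j)/q(j))` as a real number. Terms with `p(j) = 0` vanish;
terms with `q(j) = 0` also do, by the convention `x / 0 = 0`, so the value is the KL-divergence only
if `p` vanishes wherever `q` does. -/
def relEntropy (p q : ι → ℝ) : ℝ := ∑ j, p j * Real.log (p j / q j)

lemma sum_sub_sum_le_relEntropy (hp : ∀ j, 0 ≤ p j) (hq : ∀ j, 0 ≤ q j)
    (hpq : ∀ j, q j = 0 → p j = 0) : ∑ j, p j - ∑ j, q j ≤ relEntropy p q := by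
  rw [← sum_sub_distrib]
  refine sum_le_sum fun j _ => ?_
  rcases (hp j).eq_or_lt with hpj | hpj
  · simpa [← hpj] using hq j
  · have hqj : 0 < q j := (hq j).lt_of_ne' fun h => hpj.ne' (hpq j h)
    calc p j - q j = p j * (1 - (p j / q j)⁻¹) := by field_simp
      _ ≤ p j * Real.log (p j / q j) := by
        gcongr
        exact Real.one_sub_inv_le_log_of_pos (div_pos hpj hqj)

lemma relEntropy_nonneg (hp : p ∈ stdSimplex ℝ ι) (hq : q ∈ stdSimplex ℝ ι)
    (hpq : ∀ j, q j = 0 → p j = 0) : 0 ≤ relEntropy p q := by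
  simpa [hp.2, hq.2] using sum_sub_sum_le_relEntropy hp.1 hq.1 hpq

lemma relEntropy_eq_add_sum_log (hpu : ∀ j, u j = 0 → p j = 0) (hpq : ∀ j, q j = 0 → p j = 0) :
    relEntropy p q = relEntropy p u + ∑ j, p j * Real.log (u j / q j) := by
  rw [relEntropy, relEntropy, ← sum_add_distrib]
  refine sum_congr rfl fun j _ => ?_
  by_cases hpj : p j = 0
  · simp [hpj]
  · have huj : u j ≠ 0 := mt (hpu j) hpj
    have hqj : q j ≠ 0 := mt (hpq j) hpj
    rw [Real.log_div hpj hqj, Real.log_div hpj huj, Real.log_div huj hqj]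
    ring

variable {s : Finset α} {w : α → ℝ} {θ : α → ι → ℝ}

lemma sum_mul_relEntropy_eq_add_relEntropy_mixture
    (hu : ∀ i ∈ s, w i ≠ 0 → ∀ j, (∑ k ∈ s, w k • θ k) j = 0 → θ i j = 0)
    (hq : ∀ i ∈ s, w i ≠ 0 → ∀ j, q j = 0 → θ i j = 0) :
    ∑ i ∈ s, w i * relEntropy (θ i) q =
      ∑ i ∈ s, w i * relEntropy (θ i) (∑ k ∈ s, w k • θ k) +
        relEntropy (∑ k ∈ s, w k • θ k) q := by
  set u := ∑ k ∈ s, w k • θ k with hu_def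
  have mixture_part : relEntropy u q =
      ∑ i ∈ s, w i * ∑ j, θ i j * Real.log (u j / q j) := by
    have hu_apply (j : ι) : u j = ∑ i ∈ s, w i * θ i j := by simp [hu_def]
    simp_rw [mul_sum, ← mul_assoc]
    rw [sum_comm]
    simp_rw [← sum_mul, ← hu_apply, relEntropy]
  rw [mixture_part, ← sum_add_distrib]
  refine sum_congr rfl fun i hi => ?_
  by_cases hwi : w i = 0
  · simp [hwi]
  · rw [relEntropy_eq_add_sum_log (hu i hi hwi) (hq i hi hwi), mul_add]

end RelEntropy

section Mixture

variable {ι α : Type*} {s : Finset α} {w : α → ℝ} {θ : α → ι → ℝ}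

lemma eq_zero_of_mixture_eq_zero (hw : ∀ i ∈ s, 0 ≤ w i) (hθ : ∀ i ∈ s, ∀ j, 0 ≤ θ i j)
    {i : α} (hi : i ∈ s) (hwi : w i ≠ 0) {j : ι} (hj : (∑ k ∈ s, w k • θ k) j = 0) :
    θ i j = 0 := by
  simp only [Finset.sum_apply, Pi.smul_apply, smul_eq_mul] at hj
  have hterm := (sum_eq_zero_iff_of_nonneg fun k hk => mul_nonneg (hw k hk) (hθ k hk j)).mp hj i hi
  exact (mul_eq_zero.mp hterm).resolve_left hwi

lemma mixture_eq_zero {j : ι} (hj : ∀ i ∈ s, w i ≠ 0 → θ i j = 0) :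
    (∑ k ∈ s, w k • θ k) j = 0 := by
  simp only [Finset.sum_apply, Pi.smul_apply, smul_eq_mul]
  exact sum_eq_zero fun i hi => mul_eq_zero.mpr (or_iff_not_imp_left.mpr (hj i hi))

lemma sum_ofReal_mul_const (hw : ∀ i ∈ s, 0 ≤ w i) (hw_sum : ∑ i ∈ s, w i = 1) (c : ENNReal) :
    ∑ i ∈ s, ENNReal.ofReal (w i) * c = c := by
  rw [← sum_mul, ← ENNReal.ofReal_sum_of_nonneg hw, hw_sum, ENNReal.ofReal_one, one_mul]

lemma sum_ofReal_mul_le_biSup (hw : ∀ i ∈ s, 0 ≤ w i) (hw_sum : ∑ i ∈ s, w i = 1)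
    (f : α → ENNReal) : ∑ i ∈ s, ENNReal.ofReal (w i) * f i ≤ ⨆ i ∈ s, f i :=
  calc ∑ i ∈ s, ENNReal.ofReal (w i) * f i
      ≤ ∑ i ∈ s, ENNReal.ofReal (w i) * ⨆ k ∈ s, f k := by
        gcongr with i hi
        exact le_biSup f hi
    _ = ⨆ i ∈ s, f i := sum_ofReal_mul_const hw hw_sum _

end Mixture

section KL

variable {K : ℕ} {p q τ : Fin K → ℝ}

lemma KL_eq_ofReal_relEntropy (hp : ∀ j, 0 ≤ p j) (hpq : ∀ j, q j = 0 → p j = 0) :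
    KL p q = ENNReal.ofReal (relEntropy p q) := by
  rw [KL, if_pos hpq, relEntropy]
  congr 1
  refine sum_filter_of_ne fun j _ hj => (hp j).lt_of_ne' ?_
  exact left_ne_zero_of_mul hj

variable {α : Type*} {s : Finset α} {w : α → ℝ} {θ : α → Fin K → ℝ}

lemma sum_ofReal_mul_KL_eq_ofReal (hw : ∀ i ∈ s, 0 ≤ w i) (hθ : ∀ i ∈ s, IsProbVec (θ i))
    (hq : IsProbVec q) (hθq : ∀ i ∈ s, w i ≠ 0 → ∀ j, q j = 0 → θ i j = 0) :
    ∑ i ∈ s, ENNReal.ofReal (w i) * KL (θ i) q =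
      ENNReal.ofReal (∑ i ∈ s, w i * relEntropy (θ i) q) := by
  have term_nonneg : ∀ i ∈ s, 0 ≤ w i * relEntropy (θ i) q := by
    intro i hi
    by_cases hwi : w i = 0
    · simp [hwi]
    · exact mul_nonneg (hw i hi) (relEntropy_nonneg (hθ i hi) hq (hθq i hi hwi))
  rw [ENNReal.ofReal_sum_of_nonneg term_nonneg]
  refine sum_congr rfl fun i hi => ?_
  by_cases hwi : w i = 0
  · simp [hwi]
  · rw [KL_eq_ofReal_relEntropy (hθ i hi).1 (hθq i hi hwi), ENNReal.ofReal_mul (hw i hi)]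

lemma sum_ofReal_mul_KL_eq_top (hw : ∀ i ∈ s, 0 ≤ w i)
    (hθq : ¬ ∀ i ∈ s, w i ≠ 0 → ∀ j, q j = 0 → θ i j = 0) :
    ∑ i ∈ s, ENNReal.ofReal (w i) * KL (θ i) q = ⊤ := by
  push Not at hθq
  obtain ⟨i, hi, hwi, j, hqj, hθj⟩ := hθq
  have hKL : KL (θ i) q = ⊤ := if_neg fun h => hθj (h j hqj)
  have hwi_pos : 0 < w i := (hw i hi).lt_of_ne' hwi
  refine ENNReal.sum_eq_top.mpr ⟨i, hi, ?_⟩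
  rw [hKL, ENNReal.mul_top (ENNReal.ofReal_pos.mpr hwi_pos).ne']

lemma isProbVec_mixture (hw : ∀ i ∈ s, 0 ≤ w i) (hw_sum : ∑ i ∈ s, w i = 1)
    (hθ : ∀ i ∈ s, IsProbVec (θ i)) : IsProbVec (∑ k ∈ s, w k • θ k) :=
  (convex_stdSimplex ℝ (Fin K)).sum_mem hw hw_sum hθ

lemma sum_ofReal_mul_KL_mixture_le (hw : ∀ i ∈ s, 0 ≤ w i) (hw_sum : ∑ i ∈ s, w i = 1)
    (hθ : ∀ i ∈ s, IsProbVec (θ i)) (hτ : IsProbVec τ) :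
    ∑ i ∈ s, ENNReal.ofReal (w i) * KL (θ i) (∑ k ∈ s, w k • θ k) ≤
      ∑ i ∈ s, ENNReal.ofReal (w i) * KL (θ i) τ := by
  by_cases hθτ : ∀ i ∈ s, w i ≠ 0 → ∀ j, τ j = 0 → θ i j = 0
  · have hu := isProbVec_mixture hw hw_sum hθ
    have hθu : ∀ i ∈ s, w i ≠ 0 → ∀ j, (∑ k ∈ s, w k • θ k) j = 0 → θ i j = 0 :=
      fun i hi hwi j => eq_zero_of_mixture_eq_zero hw (fun k hk => (hθ k hk).1) hi hwi
    have huτ : ∀ j, τ j = 0 → (∑ k ∈ s, w k • θ k) j = 0 :=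
      fun j hτj => mixture_eq_zero fun i hi hwi => hθτ i hi hwi j hτj
    rw [sum_ofReal_mul_KL_eq_ofReal hw hθ hu hθu, sum_ofReal_mul_KL_eq_ofReal hw hθ hτ hθτ,
      sum_mul_relEntropy_eq_add_relEntropy_mixture hθu hθτ]
    exact ENNReal.ofReal_le_ofReal (le_add_of_nonneg_right (relEntropy_nonneg hu hτ huτ))
  · exact (sum_ofReal_mul_KL_eq_top hw hθτ).symm ▸ le_top

lemma le_biSup_KL_of_KL_mixture_eq (hw : ∀ i ∈ s, 0 ≤ w i) (hw_sum : ∑ i ∈ s, w i = 1)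
    (hθ : ∀ i ∈ s, IsProbVec (θ i)) {r : ENNReal}
    (hr : ∀ i ∈ s, w i ≠ 0 → KL (θ i) (∑ k ∈ s, w k • θ k) = r) (hτ : IsProbVec τ) :
    r ≤ ⨆ i ∈ s, KL (θ i) τ :=
  calc r = ∑ i ∈ s, ENNReal.ofReal (w i) * r := (sum_ofReal_mul_const hw hw_sum r).symm
    _ = ∑ i ∈ s, ENNReal.ofReal (w i) * KL (θ i) (∑ k ∈ s, w k • θ k) := by
        refine sum_congr rfl fun i hi => ?_
        by_cases hwi : w i = 0
        · simp [hwi]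
        · rw [hr i hi hwi]
    _ ≤ ∑ i ∈ s, ENNReal.ofReal (w i) * KL (θ i) τ := sum_ofReal_mul_KL_mixture_le hw hw_sum hθ hτ
    _ ≤ ⨆ i ∈ s, KL (θ i) τ := sum_ofReal_mul_le_biSup hw hw_sum _

end KL

theorem Dstar_eq_of_symmetric_general {K N : ℕ} {θ : ℕ → Fin K → ℝ} {w : ℕ → ℝ} {r : ENNReal}
    (hθ : ∀ i ∈ range N, IsProbVec (θ i))
    (hw : ∀ i ∈ range N, 0 ≤ w i) (hw_sum : ∑ i ∈ range N, w i = 1)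
    (hle : ∀ i ∈ range N, KL (θ i) (∑ k ∈ range N, w k • θ k) ≤ r)
    (heq : ∀ i ∈ range N, w i ≠ 0 → KL (θ i) (∑ k ∈ range N, w k • θ k) = r) :
    (∀ τ : Fin K → ℝ, IsProbVec τ → r ≤ ⨆ i ∈ range N, KL (θ i) τ) ∧ Dstar K N θ = r := by
  have lower : ∀ τ : Fin K → ℝ, IsProbVec τ → r ≤ ⨆ i ∈ range N, KL (θ i) τ :=
    fun τ hτ => le_biSup_KL_of_KL_mixture_eq hw hw_sum hθ heq hτ
  refine ⟨lower, le_antisymm ?_ (le_iInf fun τ => lower τ.1 τ.2)⟩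
  exact iInf_le_of_le ⟨_, isProbVec_mixture hw hw_sum hθ⟩ (iSup₂_le hle)

/-- If the KL-divergence of every policy from the uniform mixture `ū = (1/N)∑_θ θ`
equals a common constant `r ≥ 0`, then every probability vector `τ` satisfies
`max_θ D(θ‖τ) ≥ r`, hence `D*(Θ) = r` (the infimum is attained at `ū`). -/
theorem Dstar_eq_of_symmetric {K N : ℕ} (hK : 1 ≤ K) (hN : 1 ≤ N)
    (θ : ℕ → Fin K → ℝ) (hθ : ∀ i < N, IsProbVec (θ i))
    (r : ℝ) (hr : 0 ≤ r)
    (hsym : ∀ i < N,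
      KL (θ i) (fun j => (1 / (N : ℝ)) * ∑ k ∈ Finset.range N, θ k j) =
        ENNReal.ofReal r) :
    (∀ τ : Fin K → ℝ, IsProbVec τ →
      ENNReal.ofReal r ≤ ⨆ i ∈ Finset.range N, KL (θ i) τ) ∧
    Dstar K N θ = ENNReal.ofReal r := by
  have mixture_eq : ∑ k ∈ range N, (1 / (N : ℝ)) • θ k =
      fun j => (1 / (N : ℝ)) * ∑ k ∈ range N, θ k j := by
    ext j
    simp [mul_sum]
  simp only [← mixture_eq, ← mem_range] at hθ hsym
  have weights_sum : ∑ _k ∈ range N, 1 / (N : ℝ) = 1 := by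
    simp [show N ≠ 0 by omega]
  exact Dstar_eq_of_symmetric_general hθ (fun _ _ => by positivity) weights_sum
    (fun i hi => (hsym i hi).le) (fun i hi _ => hsym i hi)
end
end

section
/- For the ε-uniform structure with K ≥ 2 and 0 ≤ ε ≤ 1, D*(Θ) = ((K−1)/K)(1−ε)log(1−ε) + ((1+ε(K−1))/K)·log(1+ε(K−1)) (with the convention 0·log 0 = 0), and the infimum defining D*(Θ) is attained at the uniform distribution on [K]. -/
open Finset

noncomputable section

/-- `D*(Θ) = inf_{τ ∈ Δ_{K-1}} max_{θ ∈ Θ} D(θ‖τ)` for a family of policies indexed by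
`Fin N`. -/
def DstarF {K N : ℕ} (θ : Fin N → Fin K → ℝ) : ENNReal :=
  ⨅ τ : {τ : Fin K → ℝ // IsProbVec τ}, ⨆ a : Fin N, KL (θ a) τ.1

/-!
If `q = ∑ a, w a • θ a` is a mixture of the policies and `τ` is any probability vector, then the
`w`-average of `∑ j, θ a j * (τ j / q j)` is at most `1`, so some `a` with `0 < w a` has
`∑ j, θ a j * (τ j / q j) ≤ 1`. This says that moving from `q` towards `τ` does not decrease
`D(θ a‖·)` to first order, so `D(θ a‖q) ≤ D(θ a‖τ)` by convexity. A mixture from which all policies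
have the same divergence is therefore optimal, and for the ε-uniform structure the uniform
distribution is such a mixture.
-/

lemma mul_log_div_le {p q r : ℝ} (hp : 0 ≤ p) (hq : 0 ≤ q) (hr : 0 ≤ r)
    (hpq : q = 0 → p = 0) (hpr : r = 0 → p = 0) :
    p * Real.log (p / q) ≤ p * Real.log (p / r) + (p * (r / q) - p) := by
  rcases hp.eq_or_lt' with rfl | hp_pos
  · simp
  have hq_pos : 0 < q := hq.lt_of_ne' (mt hpq hp_pos.ne')
  have hr_pos : 0 < r := hr.lt_of_ne' (mt hpr hp_pos.ne')
  calc p * Real.log (p / q)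
      = p * (Real.log (p / r) + Real.log (r / q)) := by
        rw [← Real.log_mul (by positivity) (by positivity), div_mul_div_cancel₀ hr_pos.ne']
    _ ≤ p * (Real.log (p / r) + (r / q - 1)) := by
        gcongr
        exact Real.log_le_sub_one_of_pos (by positivity)
    _ = p * Real.log (p / r) + (p * (r / q) - p) := by ring

section Divergence

variable {K : ℕ} {p q τ : Fin K → ℝ}

lemma KL_eq_ofReal_sum (hp : ∀ j, 0 ≤ p j) (hpq : ∀ j, q j = 0 → p j = 0) :
    KL p q = ENNReal.ofReal (∑ j, p j * Real.log (p j / q j)) := by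
  rw [KL, if_pos hpq, Finset.sum_filter_of_ne]
  exact fun j _ hne => (hp j).lt_of_ne' (left_ne_zero_of_mul hne)

-- `hle` says that `D(p‖·)` has nonnegative derivative at `q` in the direction `τ - q`.
lemma KL_le_KL_of_sum_mul_div_le (hp : ∀ j, 0 ≤ p j) (hq : ∀ j, 0 ≤ q j) (hτ : ∀ j, 0 ≤ τ j)
    (hpq : ∀ j, q j = 0 → p j = 0) (hle : ∑ j, p j * (τ j / q j) ≤ ∑ j, p j) :
    KL p q ≤ KL p τ := by
  by_cases hpτ : ∀ j, τ j = 0 → p j = 0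
  · rw [KL_eq_ofReal_sum hp hpq, KL_eq_ofReal_sum hp hpτ]
    apply ENNReal.ofReal_le_ofReal
    calc ∑ j, p j * Real.log (p j / q j)
        ≤ ∑ j, (p j * Real.log (p j / τ j) + (p j * (τ j / q j) - p j)) :=
          Finset.sum_le_sum fun j _ => mul_log_div_le (hp j) (hq j) (hτ j) (hpq j) (hpτ j)
      _ = ∑ j, p j * Real.log (p j / τ j) + (∑ j, p j * (τ j / q j) - ∑ j, p j) := by
          rw [Finset.sum_add_distrib, Finset.sum_sub_distrib]
      _ ≤ ∑ j, p j * Real.log (p j / τ j) := by linarith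
  · simp only [KL, if_neg hpτ, le_top]

end Divergence

section Mixture

variable {K N : ℕ} {θ : Fin N → Fin K → ℝ} {w : Fin N → ℝ} {τ : Fin K → ℝ}

lemma IsProbVec.exists_pos_and_le_of_sum_mul_le (hw : IsProbVec w) {s : Fin N → ℝ} {c : ℝ}
    (hs : ∑ a, w a * s a ≤ c) : ∃ a, 0 < w a ∧ s a ≤ c := by
  obtain ⟨hw_nonneg, hw_sum⟩ := hw
  by_contra! hlt
  obtain ⟨b, -, hb⟩ : ∃ b ∈ Finset.univ, 0 < w b :=
    Finset.exists_lt_of_sum_lt (by simp [hw_sum])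
  have hmono : ∀ a, w a * c ≤ w a * s a := fun a => by
    rcases (hw_nonneg a).eq_or_lt' with hzero | hpos
    · simp [hzero]
    · exact mul_le_mul_of_nonneg_left (hlt a hpos).le hpos.le
  have hsum : ∑ a, w a * c < ∑ a, w a * s a :=
    Finset.sum_lt_sum (fun a _ => hmono a) ⟨b, Finset.mem_univ b, by gcongr; exact hlt b hb⟩
  rw [← Finset.sum_mul, hw_sum, one_mul] at hsum
  exact hsum.not_ge hs

lemma IsProbVec.sum_smul (hw : IsProbVec w) (hθ : ∀ a, IsProbVec (θ a)) :
    IsProbVec (∑ a, w a • θ a) :=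
  (convex_stdSimplex ℝ (Fin K)).sum_mem (fun a _ => hw.1 a) hw.2 fun a _ => hθ a

lemma eq_zero_of_sum_smul_apply_eq_zero (hw : ∀ a, 0 ≤ w a) (hθ : ∀ a j, 0 ≤ θ a j)
    {a : Fin N} (ha : 0 < w a) {j : Fin K} (hj : (∑ b, w b • θ b) j = 0) : θ a j = 0 := by
  simp only [Finset.sum_apply, Pi.smul_apply, smul_eq_mul] at hj
  have hterms := (Finset.sum_eq_zero_iff_of_nonneg fun b _ => mul_nonneg (hw b) (hθ b j)).1 hj
  exact (mul_eq_zero.1 (hterms a (Finset.mem_univ a))).resolve_left ha.ne'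

-- Equality can fail only at coordinates where the mixture vanishes, since there `x / 0 = 0`.
lemma sum_mul_sum_mul_div_sum_smul_le (hτ : ∀ j, 0 ≤ τ j) :
    ∑ a, w a * ∑ j, θ a j * (τ j / (∑ b, w b • θ b) j) ≤ ∑ j, τ j := by
  set q : Fin K → ℝ := ∑ b, w b • θ b with hq
  calc ∑ a, w a * ∑ j, θ a j * (τ j / q j)
      = ∑ j, q j * (τ j / q j) := by
        simp only [hq, Finset.mul_sum, Finset.sum_apply, Pi.smul_apply, smul_eq_mul,
          Finset.sum_mul, mul_assoc]
        exact Finset.sum_comm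
    _ ≤ ∑ j, τ j := by
        refine Finset.sum_le_sum fun j _ => ?_
        rcases eq_or_ne (q j) 0 with hzero | hne
        · simpa [hzero] using hτ j
        · exact (mul_div_cancel₀ _ hne).le

lemma exists_KL_sum_smul_le (hw : IsProbVec w) (hθ : ∀ a, IsProbVec (θ a)) (hτ : IsProbVec τ) :
    ∃ a, 0 < w a ∧ KL (θ a) (∑ b, w b • θ b) ≤ KL (θ a) τ := by
  obtain ⟨a, ha, hle⟩ := hw.exists_pos_and_le_of_sum_mul_le
    ((sum_mul_sum_mul_div_sum_smul_le (θ := θ) hτ.1).trans_eq hτ.2)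
  exact ⟨a, ha, KL_le_KL_of_sum_mul_div_le (hθ a).1 (hw.sum_smul hθ).1 hτ.1
    (fun _ => eq_zero_of_sum_smul_apply_eq_zero hw.1 (fun b => (hθ b).1) ha)
    (hle.trans_eq (hθ a).2.symm)⟩

theorem DstarF_eq_of_KL_sum_smul {C : ENNReal} (hw : IsProbVec w) (hθ : ∀ a, IsProbVec (θ a))
    (hle : ∀ a, KL (θ a) (∑ b, w b • θ b) ≤ C)
    (hge : ∀ a, 0 < w a → C ≤ KL (θ a) (∑ b, w b • θ b)) : DstarF θ = C := by
  apply le_antisymm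
  · exact iInf_le_of_le ⟨_, hw.sum_smul hθ⟩ (iSup_le hle)
  · refine le_iInf fun ⟨τ, hτ⟩ => ?_
    obtain ⟨a, ha, hKL⟩ := exists_KL_sum_smul_le hw hθ hτ
    exact (hge a ha).trans (hKL.trans (le_iSup (fun b => KL (θ b) τ) a))

end Mixture

section EpsUniform

/-- The policy `θ_a` of the ε-uniform structure: `1 - ε` times the uniform distribution plus `ε`
times the point mass at `a`. It is a probability vector also for `-1 / (K - 1) ≤ ε < 0`. -/
def epsUniform (K : ℕ) (ε : ℝ) (a j : Fin K) : ℝ :=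
  (1 - ε) / K + if j = a then ε else 0

variable {K : ℕ} {ε : ℝ}

lemma epsUniform_of_ne {a j : Fin K} (hj : j ≠ a) : epsUniform K ε a j = (1 - ε) / K := by
  rw [epsUniform, if_neg hj, add_zero]

variable [NeZero K]

lemma epsUniform_self (a : Fin K) : epsUniform K ε a a = (1 + ε * ((K : ℝ) - 1)) / K := by
  have hK : (K : ℝ) ≠ 0 := NeZero.ne _
  rw [epsUniform, if_pos rfl]
  field_simp
  ring

lemma isProbVec_uniform : IsProbVec fun _ : Fin K => (1 : ℝ) / K :=
  ⟨fun _ => by positivity, by simp⟩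

lemma isProbVec_epsUniform (hε0 : 0 ≤ 1 + ε * ((K : ℝ) - 1)) (hε1 : ε ≤ 1) (a : Fin K) :
    IsProbVec (epsUniform K ε a) := by
  refine ⟨fun j => ?_, ?_⟩
  · rcases eq_or_ne j a with rfl | hj
    · rw [epsUniform_self]
      positivity
    · rw [epsUniform_of_ne hj]
      exact div_nonneg (sub_nonneg.2 hε1) K.cast_nonneg
  · simp [epsUniform, Finset.sum_add_distrib, mul_div_cancel₀ _ (NeZero.ne (K : ℝ))]

lemma sum_uniform_smul_epsUniform :
    ∑ a : Fin K, ((1 : ℝ) / K) • epsUniform K ε a = fun _ => (1 : ℝ) / K := by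
  ext j
  simp [epsUniform, ← Finset.mul_sum, Finset.sum_add_distrib,
    mul_div_cancel₀ _ (NeZero.ne (K : ℝ))]

lemma sum_epsUniform_mul_log (a : Fin K) :
    ∑ j, epsUniform K ε a j * Real.log (epsUniform K ε a j / (1 / K)) =
      (((K : ℝ) - 1) / K) * (1 - ε) * Real.log (1 - ε) +
        ((1 + ε * ((K : ℝ) - 1)) / K) * Real.log (1 + ε * ((K : ℝ) - 1)) := by
  have hK : (K : ℝ) ≠ 0 := NeZero.ne _
  have hdiv (x : ℝ) : x / K / (1 / K) = x := by field_simp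
  have hoff : ∀ j ∈ ({a}ᶜ : Finset (Fin K)),
      epsUniform K ε a j * Real.log (epsUniform K ε a j / (1 / K)) =
        (1 - ε) / K * Real.log (1 - ε) := fun j hj => by
    rw [epsUniform_of_ne (by simpa using hj), hdiv]
  rw [Fintype.sum_eq_add_sum_compl a, epsUniform_self, hdiv, Finset.sum_congr rfl hoff,
    Finset.sum_const, Finset.card_compl, Finset.card_singleton, Fintype.card_fin, nsmul_eq_mul,
    Nat.cast_pred (NeZero.pos K)]
  ring

lemma KL_epsUniform_uniform (hε0 : 0 ≤ 1 + ε * ((K : ℝ) - 1)) (hε1 : ε ≤ 1) (a : Fin K) :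
    KL (epsUniform K ε a) (fun _ => (1 : ℝ) / K) =
      ENNReal.ofReal ((((K : ℝ) - 1) / K) * (1 - ε) * Real.log (1 - ε) +
        ((1 + ε * ((K : ℝ) - 1)) / K) * Real.log (1 + ε * ((K : ℝ) - 1))) := by
  have huniform_ne : (1 : ℝ) / K ≠ 0 := one_div_ne_zero (NeZero.ne _)
  rw [KL_eq_ofReal_sum (isProbVec_epsUniform hε0 hε1 a).1 fun _ h => absurd h huniform_ne,
    sum_epsUniform_mul_log]

theorem Dstar_eps_uniform_general (hε0 : 0 ≤ 1 + ε * ((K : ℝ) - 1)) (hε1 : ε ≤ 1) :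
    (⨆ a, KL (epsUniform K ε a) (fun _ => (1 : ℝ) / K)) =
      ENNReal.ofReal ((((K : ℝ) - 1) / K) * (1 - ε) * Real.log (1 - ε) +
        ((1 + ε * ((K : ℝ) - 1)) / K) * Real.log (1 + ε * ((K : ℝ) - 1))) ∧
    DstarF (epsUniform K ε) =
      ENNReal.ofReal ((((K : ℝ) - 1) / K) * (1 - ε) * Real.log (1 - ε) +
        ((1 + ε * ((K : ℝ) - 1)) / K) * Real.log (1 + ε * ((K : ℝ) - 1))) := by
  have hKL := KL_epsUniform_uniform (K := K) hε0 hε1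
  refine ⟨by simp only [hKL, ciSup_const], ?_⟩
  apply DstarF_eq_of_KL_sum_smul isProbVec_uniform (isProbVec_epsUniform hε0 hε1)
  · exact fun a => by rw [sum_uniform_smul_epsUniform, hKL]
  · exact fun a _ => by rw [sum_uniform_smul_epsUniform, hKL]

end EpsUniform

/-- For the ε-uniform structure (`θ_a(j) = (1-ε)/K + ε·1{j=a}`),
`D*(Θ) = ((K-1)/K)(1-ε)log(1-ε) + ((1+ε(K-1))/K)log(1+ε(K-1))` (with `0·log 0 = 0`),
and the infimum defining `D*(Θ)` is attained at the uniform distribution on `[K]`. -/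
theorem Dstar_eps_uniform {K : ℕ} (hK : 2 ≤ K) (ε : ℝ) (hε0 : 0 ≤ ε) (hε1 : ε ≤ 1) :
    (⨆ a : Fin K,
        KL (fun j => (1 - ε) / K + if j = a then ε else 0) (fun _ => (1 : ℝ) / K)) =
      ENNReal.ofReal ((((K : ℝ) - 1) / K) * (1 - ε) * Real.log (1 - ε) +
        ((1 + ε * ((K : ℝ) - 1)) / K) * Real.log (1 + ε * ((K : ℝ) - 1))) ∧
    DstarF (fun (a : Fin K) (j : Fin K) => (1 - ε) / K + if j = a then ε else 0) =
      ENNReal.ofReal ((((K : ℝ) - 1) / K) * (1 - ε) * Real.log (1 - ε) +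
        ((1 + ε * ((K : ℝ) - 1)) / K) * Real.log (1 + ε * ((K : ℝ) - 1))) := by
  have : NeZero K := ⟨by lia⟩
  have hK1 : 0 ≤ (K : ℝ) - 1 := sub_nonneg.2 (Nat.one_le_cast.2 NeZero.one_le)
  exact Dstar_eps_uniform_general (by positivity) hε1
end
end

section
/- For every integer K ≥ 2 and every ε ∈ (0,1), (K−1)(1−ε)·log(1−ε) + (1+ε(K−1))·log(1+ε(K−1)) < ε·K·log K; that is, for the ε-uniform structure the quantity K·D*(Θ) is strictly smaller than ε·K·log K (while the two sides coincide at ε = 0 and ε = 1). -/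
noncomputable section

/-!
The function `x ↦ x * log x` vanishes at `1` and is convex on `[0, ∞)`. Since `1 + ε (K - 1)` is the
point at parameter `ε` of the segment from `1` to `K`, the chord over this segment bounds the second
summand by `ε K log K`. The strictness comes from the first summand, which is negative because
`0 < 1 - ε < 1`.
-/

theorem one_add_mul_sub_one_mul_log_le {x ε : ℝ} (hx : 0 ≤ x) (hε₀ : 0 ≤ ε) (hε₁ : ε ≤ 1) :
    (1 + ε * (x - 1)) * Real.log (1 + ε * (x - 1)) ≤ ε * x * Real.log x := by
  have point_eq : 1 + ε * (x - 1) = (1 - ε) • 1 + ε • x := by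
    simp only [smul_eq_mul]
    ring
  have chord_eq : ε * x * Real.log x = (1 - ε) • (1 * Real.log 1) + ε • (x * Real.log x) := by
    simp only [smul_eq_mul, Real.log_one]
    ring
  rw [point_eq, chord_eq]
  exact Real.convexOn_mul_log.2 (Set.mem_Ici.2 zero_le_one) (Set.mem_Ici.2 hx)
    (sub_nonneg.2 hε₁) hε₀ (sub_add_cancel 1 ε)

theorem eps_uniform_KDstar_lt_general (K : ℝ) (hK : 1 < K) :
    (∀ ε : ℝ, 0 < ε → ε < 1 →
      (K - 1) * (1 - ε) * Real.log (1 - ε) +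
          (1 + ε * (K - 1)) * Real.log (1 + ε * (K - 1)) <
        ε * K * Real.log K) ∧
    (K - 1) * (1 - 0) * Real.log (1 - 0) +
        (1 + 0 * (K - 1)) * Real.log (1 + 0 * (K - 1)) =
      0 * K * Real.log K ∧
    (K - 1) * (1 - 1) * Real.log (1 - 1) +
        (1 + 1 * (K - 1)) * Real.log (1 + 1 * (K - 1)) =
      1 * K * Real.log K := by
  refine ⟨fun ε hε₀ hε₁ => ?_, by simp, by simp⟩
  have first_neg : (K - 1) * (1 - ε) * Real.log (1 - ε) < 0 := by
    rw [mul_assoc]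
    exact mul_neg_of_pos_of_neg (sub_pos.2 hK)
      (Real.mul_log_neg (sub_pos.2 hε₁) (sub_lt_self 1 hε₀))
  have second_le : (1 + ε * (K - 1)) * Real.log (1 + ε * (K - 1)) ≤ ε * K * Real.log K :=
    one_add_mul_sub_one_mul_log_le (zero_le_one.trans hK.le) hε₀.le hε₁.le
  linarith

/-- For every integer `K ≥ 2` and every `ε ∈ (0,1)`,
`(K-1)(1-ε)log(1-ε) + (1+ε(K-1))log(1+ε(K-1)) < εK log K`, i.e. for the ε-uniform
structure `K·D*(Θ)` is strictly smaller than `εK log K`; the two sides coincide at the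
endpoints `ε = 0` and `ε = 1` (with the convention `0·log 0 = 0`, which agrees with
`Real.log 0 = 0`). -/
theorem eps_uniform_KDstar_lt (K : ℕ) (hK : 2 ≤ K) :
    (∀ ε : ℝ, 0 < ε → ε < 1 →
      ((K : ℝ) - 1) * (1 - ε) * Real.log (1 - ε) +
          (1 + ε * ((K : ℝ) - 1)) * Real.log (1 + ε * ((K : ℝ) - 1)) <
        ε * K * Real.log K) ∧
    ((K : ℝ) - 1) * (1 - 0) * Real.log (1 - 0) +
        (1 + 0 * ((K : ℝ) - 1)) * Real.log (1 + 0 * ((K : ℝ) - 1)) =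
      0 * (K : ℝ) * Real.log K ∧
    ((K : ℝ) - 1) * (1 - 1) * Real.log (1 - 1) +
        (1 + 1 * ((K : ℝ) - 1)) * Real.log (1 + 1 * ((K : ℝ) - 1)) =
      1 * (K : ℝ) * Real.log K :=
  eps_uniform_KDstar_lt_general K (Nat.one_lt_cast.2 hK)
end
end
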